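/- arXiv:1108.5983 — 11 statements merged into one kernel-verified Lean document; each statement's English description precedes it below -/
import Mathlib

section
/- Suppose real numbers Σ₊, Σ₋, Σ×, N₋, N×, A, Ω, Π₊, Π₋, Π×, Ξ satisfy the Hamiltonian constraint 1 = Ω + Σ₊² + Σ₋² + Σ×² + A² + N₋² + N×² + Π₊, the momentum constraint Ξ + 2(Σ₊A + Σ₋N× − Σ×N₋) = 0, the electromagnetic constraint Π₊² = Ξ² + (1/3)(Π₋² + Π×²), and the physical conditions Ω ≥ 0, Π₊ ≥ 0. Then |Ξ| ≤ Π₊, 1 − Ω = (Σ₊ + A)² + (Σ₋ + N×)² + (Σ× − N₋)² + Π₊ + Ξ and 1 − Ω = (Σ₊ − A)² + (Σ₋ − N×)² + (Σ× + N₋)² + Π₊ − Ξ, hence |Σ₊ + A| ≤ 1 and |Σ₊ − A| ≤ 1, and consequently Z := (1 + Σ₊)² − A² = (1 + Σ₊ + A)(1 + Σ₊ − A) ≥ 0. -/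
/-- Algebraic consequences of the Hamiltonian, momentum and
electromagnetic constraints of Bianchi class B Einstein–Maxwell cosmology:
`|Ξ| ≤ Π₊`, the two rewritings of `1 − Ω`, hence `|Σ₊ ± A| ≤ 1` and
`Z = (1+Σ₊)² − A² = (1+Σ₊+A)(1+Σ₊−A) ≥ 0`. -/
theorem stmt_0 (Sp Sm Sx Nm Nx A Om Pp Pm Px Xi : ℝ)
    (hHam : 1 = Om + Sp ^ 2 + Sm ^ 2 + Sx ^ 2 + A ^ 2 + Nm ^ 2 + Nx ^ 2 + Pp)
    (hMom : Xi + 2 * (Sp * A + Sm * Nx - Sx * Nm) = 0)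
    (hEM : Pp ^ 2 = Xi ^ 2 + (1 / 3) * (Pm ^ 2 + Px ^ 2))
    (hOm : 0 ≤ Om) (hPp : 0 ≤ Pp) :
    |Xi| ≤ Pp ∧
    1 - Om = (Sp + A) ^ 2 + (Sm + Nx) ^ 2 + (Sx - Nm) ^ 2 + Pp + Xi ∧
    1 - Om = (Sp - A) ^ 2 + (Sm - Nx) ^ 2 + (Sx + Nm) ^ 2 + Pp - Xi ∧
    |Sp + A| ≤ 1 ∧ |Sp - A| ≤ 1 ∧
    (1 + Sp) ^ 2 - A ^ 2 = (1 + Sp + A) * (1 + Sp - A) ∧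
    0 ≤ (1 + Sp) ^ 2 - A ^ 2 := by
  have h1 : |Xi| ≤ Pp := abs_le_of_sq_le_sq (by nlinarith [sq_nonneg Pm, sq_nonneg Px]) hPp
  obtain ⟨ha, hb⟩ := abs_le.mp h1
  have h2 : 1 - Om = (Sp + A) ^ 2 + (Sm + Nx) ^ 2 + (Sx - Nm) ^ 2 + Pp + Xi := by
    linear_combination hHam - hMom
  have h3 : 1 - Om = (Sp - A) ^ 2 + (Sm - Nx) ^ 2 + (Sx + Nm) ^ 2 + Pp - Xi := by
    linear_combination hHam + hMom
  have h4 : |Sp + A| ≤ 1 := abs_le_of_sq_le_sq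
    (by linarith [sq_nonneg (Sm + Nx), sq_nonneg (Sx - Nm)]) zero_le_one
  have h5 : |Sp - A| ≤ 1 := abs_le_of_sq_le_sq
    (by linarith [sq_nonneg (Sm - Nx), sq_nonneg (Sx + Nm)]) zero_le_one
  have h6 : (1 + Sp) ^ 2 - A ^ 2 = (1 + Sp + A) * (1 + Sp - A) := by ring
  refine ⟨h1, h2, h3, h4, h5, h6, ?_⟩
  rw [h6]
  exact mul_nonneg (by linarith [(abs_le.mp h4).1]) (by linarith [(abs_le.mp h5).1])
end

section
/- Let Σ₊, Σ₋, Σ×, N₋, N×, A, Ω, Π₊, q : I → ℝ be functions on an interval I with Σ₊ and A differentiable, satisfying at every point: the evolution equations Σ₊' = (q−2)Σ₊ − 2(N₋² + N×²) − Π₊ and A' = (q+2Σ₊)A, the deceleration parameter q = 2(Σ₊² + Σ₋² + Σ×²) + (1/2)(3γ−2)Ω + Π₊, and the Hamiltonian constraint 1 = Ω + Σ₊² + Σ₋² + Σ×² + A² + N₋² + N×² + Π₊. Then the function Z := (1 + Σ₊)² − A² satisfies the identity Z' = 2(q−2)Z − 3(γ−2)(1+Σ₊)Ω on I. -/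
/-- Along solutions of the class B Einstein–Maxwell system, the
function `Z = (1+Σ₊)² − A²` satisfies `Z' = 2(q−2)Z − 3(γ−2)(1+Σ₊)Ω`. -/
theorem stmt_3 (γ : ℝ) (I : Set ℝ) (hI : I.OrdConnected)
    (Sp Sm Sx Nm Nx A Om Pp q : ℝ → ℝ)
    (hSp : ∀ τ ∈ I, HasDerivAt Sp
      ((q τ - 2) * Sp τ - 2 * ((Nm τ) ^ 2 + (Nx τ) ^ 2) - Pp τ) τ)
    (hA : ∀ τ ∈ I, HasDerivAt A ((q τ + 2 * Sp τ) * A τ) τ)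
    (hq : ∀ τ ∈ I, q τ = 2 * ((Sp τ) ^ 2 + (Sm τ) ^ 2 + (Sx τ) ^ 2)
      + (1 / 2) * (3 * γ - 2) * Om τ + Pp τ)
    (hHam : ∀ τ ∈ I, 1 = Om τ + (Sp τ) ^ 2 + (Sm τ) ^ 2 + (Sx τ) ^ 2
      + (A τ) ^ 2 + (Nm τ) ^ 2 + (Nx τ) ^ 2 + Pp τ) :
    ∀ τ ∈ I, HasDerivAt (fun t => (1 + Sp t) ^ 2 - (A t) ^ 2)
      (2 * (q τ - 2) * ((1 + Sp τ) ^ 2 - (A τ) ^ 2)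
        - 3 * (γ - 2) * (1 + Sp τ) * Om τ) τ := by
  intro τ hτ
  have h := (((hSp τ hτ).const_add 1).fun_pow 2).fun_sub ((hA τ hτ).fun_pow 2)
  refine h.congr_deriv ?_
  have h1 := hq τ hτ
  have h2 := hHam τ hτ
  norm_num
  linear_combination 2 * (1 + Sp τ) * (2 * h2 - h1)
end

section
/- Let Σ₊, Σ₋, Σ×, N₋, N×, A, Π₊, Π₋, Π×, Ξ, q : I → ℝ be functions on an interval I with Σ₊ and A differentiable, satisfying at every point: Σ₊' = (q−2)Σ₊ − 2(N₋² + N×²) − Π₊, A' = (q+2Σ₊)A, the electro-vacuum (Ω = 0) deceleration parameter q = 2(Σ₊² + Σ₋² + Σ×²) + Π₊, the electro-vacuum Hamiltonian constraint 1 = Σ₊² + Σ₋² + Σ×² + A² + N₋² + N×² + Π₊, the momentum constraint Ξ + 2(Σ₊A + Σ₋N× − Σ×N₋) = 0, the electromagnetic constraint Π₊² = Ξ² + (1/3)(Π₋² + Π×²), and Π₊ ≥ 0. Then the function Z := (1 + Σ₊)² − A² is nonnegative and monotone nonincreasing on I. -/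
/-- In the electro-vacuum (Ω = 0) class B Einstein–Maxwell system,
`Z = (1+Σ₊)² − A²` is nonnegative and monotone nonincreasing. -/
theorem stmt_4 (I : Set ℝ) (hI : I.OrdConnected)
    (Sp Sm Sx Nm Nx A Pp Pm Px Xi q : ℝ → ℝ)
    (hSp : ∀ τ ∈ I, HasDerivAt Sp
      ((q τ - 2) * Sp τ - 2 * ((Nm τ) ^ 2 + (Nx τ) ^ 2) - Pp τ) τ)
    (hA : ∀ τ ∈ I, HasDerivAt A ((q τ + 2 * Sp τ) * A τ) τ)
    (hq : ∀ τ ∈ I, q τ = 2 * ((Sp τ) ^ 2 + (Sm τ) ^ 2 + (Sx τ) ^ 2) + Pp τ)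
    (hHam : ∀ τ ∈ I, 1 = (Sp τ) ^ 2 + (Sm τ) ^ 2 + (Sx τ) ^ 2
      + (A τ) ^ 2 + (Nm τ) ^ 2 + (Nx τ) ^ 2 + Pp τ)
    (hMom : ∀ τ ∈ I, Xi τ + 2 * (Sp τ * A τ + Sm τ * Nx τ - Sx τ * Nm τ) = 0)
    (hEM : ∀ τ ∈ I, (Pp τ) ^ 2 = (Xi τ) ^ 2 + (1 / 3) * ((Pm τ) ^ 2 + (Px τ) ^ 2))
    (hPp : ∀ τ ∈ I, 0 ≤ Pp τ) :
    (∀ τ ∈ I, 0 ≤ (1 + Sp τ) ^ 2 - (A τ) ^ 2) ∧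
    AntitoneOn (fun t => (1 + Sp t) ^ 2 - (A t) ^ 2) I := by
  have hZ : ∀ τ ∈ I, 0 ≤ (1 + Sp τ) ^ 2 - (A τ) ^ 2 := by
    intro τ h
    have h1 := hHam τ h
    have h2 := hMom τ h
    have h3 := hEM τ h
    have h4 := hPp τ h
    have h5 : |Xi τ| ≤ Pp τ := by
      apply abs_le_of_sq_le_sq _ h4
      nlinarith [sq_nonneg (Pm τ), sq_nonneg (Px τ)]
    obtain ⟨h6, h7⟩ := abs_le.mp h5
    have e1 : (Sp τ + A τ) ^ 2 ≤ 1 := by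
      nlinarith [sq_nonneg (Sm τ + Nx τ), sq_nonneg (Sx τ - Nm τ),
        sq_nonneg (Sm τ - Nx τ), sq_nonneg (Sx τ + Nm τ)]
    have e2 : (Sp τ - A τ) ^ 2 ≤ 1 := by
      nlinarith [sq_nonneg (Sm τ + Nx τ), sq_nonneg (Sx τ - Nm τ),
        sq_nonneg (Sm τ - Nx τ), sq_nonneg (Sx τ + Nm τ)]
    have f1 : -1 ≤ Sp τ + A τ := by nlinarith
    have f2 : -1 ≤ Sp τ - A τ := by nlinarith
    nlinarith [mul_nonneg (by linarith : 0 ≤ 1 + Sp τ + A τ) (by linarith : 0 ≤ 1 + Sp τ - A τ)]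
  refine ⟨hZ, ?_⟩
  have hd : ∀ τ ∈ I, HasDerivAt (fun t => (1 + Sp t) ^ 2 - (A t) ^ 2)
      (-2 * (2 * (Nm τ ^ 2 + Nx τ ^ 2) + Pp τ + 2 * A τ ^ 2) * ((1 + Sp τ) ^ 2 - (A τ) ^ 2)) τ := by
    intro τ h
    have := (((hSp τ h).const_add 1).fun_pow 2).fun_sub ((hA τ h).fun_pow 2)
    refine this.congr_deriv ?_
    have h1 : q τ = 2 - 2 * A τ ^ 2 - 2 * (Nm τ ^ 2 + Nx τ ^ 2) - Pp τ := by
      linarith [hq τ h, hHam τ h]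
    rw [h1]
    norm_num
    ring
  apply antitoneOn_of_deriv_nonpos hI.convex
  · exact fun τ h => (hd τ h).continuousAt.continuousWithinAt
  · exact fun τ h => (hd τ (interior_subset h)).differentiableAt.differentiableWithinAt
  · intro τ h
    have h := interior_subset h
    rw [(hd τ h).deriv]
    have := hPp τ h
    have := mul_nonneg (by positivity : 0 ≤ 2 * (Nm τ ^ 2 + Nx τ ^ 2) + Pp τ + 2 * A τ ^ 2) (hZ τ h)
    linarith
end

section
/- Let h̃, r, s ∈ ℝ with 0 ≤ r ≤ 1, s² ≤ r(1−r) and h̃(1−r)² + 3s² ≥ 0. Define Σ₊ = −r, Σ₋ = 0, Σ× = s, N₊ = √(h̃(1−r)² + 3s²), N₋ = −s, N× = 0, A = 1−r, Π₊ = Ξ = 2r(1−r) − 2s², Π₋ = Π× = 0, Ω = 0, R = −N₊, and q = 2r. Then: (i) q = 2(Σ₊² + Σ₋² + Σ×²) + (1/2)(3γ−2)Ω + Π₊; (ii) all twelve evolution right-hand sides vanish, i.e. (q−2)Σ₊ − 2(N₋²+N×²) − Π₊ = 0, (q−2)Σ₋ + 2Σ×R − 2(N₊N₋ − AN×) − Π₋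 = 0, (q−2)Σ× − 2Σ₋R − 2(N₊N× + AN₋) − Π× = 0, (q+2Σ₊)N₊ + 6(Σ₋N₋ + Σ×N×) = 0, (q+2Σ₊)N₋ + 2(Σ₋N₊ + N×R) = 0, (q+2Σ₊)N× + 2(Σ×N₊ − N₋R) = 0, (q+2Σ₊)A = 0, (2q−3γ+2)Ω = 0, 2(q−1+Σ₊)Π₊ + 2(Σ₋Π₋ + Σ×Π× + AΞ) = 0, 2(q−1+Σ₊)Ξ + 2(AΠ₊ + N×Π₋ − N₋Π×) = 0, 2(q−1+Σ₊)Π₋ + 6Σ₋Π₊ − 6N×Ξ + 2RΠ× = 0, 2(q−1+Σ₊)Π× + 6Σ×Π₊ + 6N₋Ξ − 2RΠ₋ = 0; (iii) the constraints hold: 1 = Ω + Σ₊² + Σ₋² + Σ×² + A² + N₋² + N×² + Π₊, Ξ + 2(Σ₊A + Σ₋N× − Σ×N₋) = 0, Π₊² = Ξ² + (1/3)(Π₋² + Π×²), and N₊² − 3(N₋² + N×²) = h̃A²; (iv) Π₊ ≥ 0. Hence this two-parameter family (the electro-vacuum plane-wave solutions) consists of equilibrium points of the system. -/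
/-- The two-parameter family of electro-vacuum plane-wave states
consists of equilibrium points of the Bianchi class B Einstein–Maxwell system:
all evolution right-hand sides vanish and all constraints hold. -/
theorem stmt_5 (htilde r s γ : ℝ)
    (hr0 : 0 ≤ r) (hr1 : r ≤ 1)
    (hs : s ^ 2 ≤ r * (1 - r))
    (hh : 0 ≤ htilde * (1 - r) ^ 2 + 3 * s ^ 2)
    (Sp Sm Sx Np Nm Nx A Pp Pm Px Xi Om R q : ℝ)
    (hSp : Sp = -r) (hSm : Sm = 0) (hSx : Sx = s)
    (hNp : Np = Real.sqrt (htilde * (1 - r) ^ 2 + 3 * s ^ 2))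
    (hNm : Nm = -s) (hNx : Nx = 0)
    (hA : A = 1 - r)
    (hPp : Pp = 2 * r * (1 - r) - 2 * s ^ 2)
    (hXi : Xi = 2 * r * (1 - r) - 2 * s ^ 2)
    (hPm : Pm = 0) (hPx : Px = 0) (hOm : Om = 0)
    (hR : R = -Np) (hq : q = 2 * r) :
    -- (i) deceleration parameter
    (q = 2 * (Sp ^ 2 + Sm ^ 2 + Sx ^ 2) + (1 / 2) * (3 * γ - 2) * Om + Pp) ∧
    -- (ii) all twelve evolution right-hand sides vanish
    ((q - 2) * Sp - 2 * (Nm ^ 2 + Nx ^ 2) - Pp = 0) ∧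
    ((q - 2) * Sm + 2 * Sx * R - 2 * (Np * Nm - A * Nx) - Pm = 0) ∧
    ((q - 2) * Sx - 2 * Sm * R - 2 * (Np * Nx + A * Nm) - Px = 0) ∧
    ((q + 2 * Sp) * Np + 6 * (Sm * Nm + Sx * Nx) = 0) ∧
    ((q + 2 * Sp) * Nm + 2 * (Sm * Np + Nx * R) = 0) ∧
    ((q + 2 * Sp) * Nx + 2 * (Sx * Np - Nm * R) = 0) ∧
    ((q + 2 * Sp) * A = 0) ∧
    ((2 * q - 3 * γ + 2) * Om = 0) ∧
    (2 * (q - 1 + Sp) * Pp + 2 * (Sm * Pm + Sx * Px + A * Xi) = 0) ∧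
    (2 * (q - 1 + Sp) * Xi + 2 * (A * Pp + Nx * Pm - Nm * Px) = 0) ∧
    (2 * (q - 1 + Sp) * Pm + 6 * Sm * Pp - 6 * Nx * Xi + 2 * R * Px = 0) ∧
    (2 * (q - 1 + Sp) * Px + 6 * Sx * Pp + 6 * Nm * Xi - 2 * R * Pm = 0) ∧
    -- (iii) constraints
    (1 = Om + Sp ^ 2 + Sm ^ 2 + Sx ^ 2 + A ^ 2 + Nm ^ 2 + Nx ^ 2 + Pp) ∧
    (Xi + 2 * (Sp * A + Sm * Nx - Sx * Nm) = 0) ∧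
    (Pp ^ 2 = Xi ^ 2 + (1 / 3) * (Pm ^ 2 + Px ^ 2)) ∧
    (Np ^ 2 - 3 * (Nm ^ 2 + Nx ^ 2) = htilde * A ^ 2) ∧
    -- (iv) positivity
    (0 ≤ Pp) := by
  have hsq : Np ^ 2 = htilde * (1 - r) ^ 2 + 3 * s ^ 2 := by
    rw [hNp]; exact Real.sq_sqrt hh
  clear hNp
  subst hSp hSm hSx hNm hNx hA hPp hXi hPm hPx hOm hR hq
  refine ⟨?_, ?_, ?_, ?_, ?_, ?_, ?_, ?_, ?_, ?_, ?_, ?_, ?_, ?_, ?_, ?_, ?_, ?_⟩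
  on_goal 18 => linarith
  on_goal 17 => rw [hsq]
  all_goals ring
end

section
/- Let γ ∈ ℝ and set α = (3γ−2)/2 and β = (3γ−6)/2. Let A, Σ₊ : I → ℝ be differentiable functions on an interval I and define pointwise Π₊ = −2AΣ₊ and q = α(1−A²) − βΣ₊² + (α+β)AΣ₊. If A' = (q + 2Σ₊)A and Σ₊' = (q−2)Σ₊ − Π₊ on I, then the function αA − βΣ₊ satisfies the identity (αA − βΣ₊)' = [α²A − β²Σ₊ + (αA − βΣ₊)²]·[1 − (A − Σ₊)] on I. -/
/-- On the branch `Π₊ = −2AΣ₊` of the LRS system, the function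
`αA − βΣ₊` (with `α = (3γ−2)/2`, `β = (3γ−6)/2`) satisfies the derivative
identity `(αA − βΣ₊)' = [α²A − β²Σ₊ + (αA − βΣ₊)²]·[1 − (A − Σ₊)]`. -/
theorem stmt_9 (γ : ℝ) (I : Set ℝ) (hI : I.OrdConnected)
    (A Sp : ℝ → ℝ)
    (α β : ℝ) (hα : α = (3 * γ - 2) / 2) (hβ : β = (3 * γ - 6) / 2)
    (Pp q : ℝ → ℝ)
    (hPp : ∀ τ ∈ I, Pp τ = -2 * A τ * Sp τ)
    (hq : ∀ τ ∈ I, q τ = α * (1 - (A τ) ^ 2) - β * (Sp τ) ^ 2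
      + (α + β) * A τ * Sp τ)
    (hA : ∀ τ ∈ I, HasDerivAt A ((q τ + 2 * Sp τ) * A τ) τ)
    (hSp : ∀ τ ∈ I, HasDerivAt Sp ((q τ - 2) * Sp τ - Pp τ) τ) :
    ∀ τ ∈ I, HasDerivAt (fun t => α * A t - β * Sp t)
      ((α ^ 2 * A τ - β ^ 2 * Sp τ + (α * A τ - β * Sp τ) ^ 2)
        * (1 - (A τ - Sp τ))) τ := by
  intro τ hτ
  have h := ((hA τ hτ).const_mul α).sub ((hSp τ hτ).const_mul β)
  refine HasDerivAt.congr_deriv h ?_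
  rw [hPp τ hτ, hq τ hτ, hα, hβ]
  ring
end

section
/- Let 2/3 ≤ γ ≤ 2 and set α = (3γ−2)/2 and β = (3γ−6)/2. Let A, Σ₊ be real numbers with A > 0, Σ₊ < 0 and A − Σ₊ < 1. Then [α²A − β²Σ₊ + (αA − βΣ₊)²]·[1 − (A − Σ₊)] > 0; consequently, along any solution of the LRS system on the invariant set Σ₊ < 0 with positive fluid density Ω = 1 − (A−Σ₊)² > 0, the function αA − βΣ₊ is strictly increasing. -/
/-- For `2/3 ≤ γ ≤ 2`, `α = (3γ−2)/2`, `β = (3γ−6)/2`, on the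
region `A > 0`, `Σ₊ < 0`, `A − Σ₊ < 1` one has
`[α²A − β²Σ₊ + (αA − βΣ₊)²]·[1 − (A − Σ₊)] > 0`; consequently along any
solution of the LRS system on the invariant set `Σ₊ < 0` with positive fluid
density, the function `αA − βΣ₊` is strictly increasing. -/
theorem stmt_10 (γ : ℝ) (hγl : 2 / 3 ≤ γ) (hγu : γ ≤ 2)
    (α β : ℝ) (hα : α = (3 * γ - 2) / 2) (hβ : β = (3 * γ - 6) / 2) :
    (∀ A Sp : ℝ, 0 < A → Sp < 0 → A - Sp < 1 →
      (α ^ 2 * A - β ^ 2 * Sp + (α * A - β * Sp) ^ 2) * (1 - (A - Sp)) > 0) ∧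
    (∀ (I : Set ℝ), I.OrdConnected →
      ∀ (A Sp : ℝ → ℝ),
        (∀ τ ∈ I, HasDerivAt (fun t => α * A t - β * Sp t)
          ((α ^ 2 * A τ - β ^ 2 * Sp τ + (α * A τ - β * Sp τ) ^ 2)
            * (1 - (A τ - Sp τ))) τ) →
        (∀ τ ∈ I, 0 < A τ) →
        (∀ τ ∈ I, Sp τ < 0) →
        (∀ τ ∈ I, 0 < 1 - (A τ - Sp τ) ^ 2) →
        StrictMonoOn (fun t => α * A t - β * Sp t) I) := by
  have key : ∀ A Sp : ℝ, 0 < A → Sp < 0 → A - Sp < 1 →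
      (α ^ 2 * A - β ^ 2 * Sp + (α * A - β * Sp) ^ 2) * (1 - (A - Sp)) > 0 := by
    intro A Sp hA hS h
    apply mul_pos _ (by linarith)
    have h1 : 0 ≤ α ^ 2 * A := by positivity
    have h2 : 0 ≤ β ^ 2 * (-Sp) := mul_nonneg (sq_nonneg _) (by linarith)
    have h3 := sq_nonneg (α * A - β * Sp)
    rcases eq_or_ne α 0 with h0 | h0
    · have hb : β = -2 := by linarith
      have h4 : β ^ 2 * (-Sp) = 4 * (-Sp) := by rw [hb]; ring
      linarith
    · have h4 : 0 < α ^ 2 * A := by positivity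
      linarith
  refine ⟨key, ?_⟩
  intro I hI A Sp hd hA hS hO
  apply strictMonoOn_of_deriv_pos hI.convex
  · exact fun t ht => (hd t ht).continuousAt.continuousWithinAt
  · intro t ht
    have ht := interior_subset ht
    rw [(hd t ht).deriv]
    exact key _ _ (hA t ht) (hS t ht) (by nlinarith [hO t ht, hA t ht, hS t ht])
end

section
/- Define on the interval τ > 0: a(τ)⁻² = e^{3τ}(sinh 2τ)^{−1/2}, α(τ) = (1/2)(cosh 2τ/sinh 2τ) − 3/2, β(τ) = cosh 2τ/sinh 2τ, ρ(τ) = 0, π₊(τ) = (cosh 2τ/sinh 2τ − 1)·e^{−3τ}(sinh 2τ)^{1/2}, q₁(τ) = 3π₊(τ). Then for every τ > 0 and every γ, the equations (E1) α' − 2β' − 2αβ − 2β² = (1/2)(3γ−2)a⁻²ρ + 3a⁻²π₊, (E2) 2(α+β) = a⁻²q₁, (E3) −α' − 2αβ − 2 = (1/2)(2−γ)a⁻²ρ + 3a⁻²π₊, (E4) β' + 2β² − 2 = (1/2)(2−γ)a⁻²ρ hold, with ρ = 0, π₊ > 0 and q₁ = +3π₊. This is the right-handed electro-vacuum LRS solution,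 which is future-asymptotic to the Milne universe. -/
/-- The right-handed electro-vacuum LRS solution: with
`a⁻² = e^{3τ}(sinh 2τ)^{−1/2}`, `α = (1/2)coth 2τ − 3/2`, `β = coth 2τ`,
`ρ = 0`, `π₊ = (coth 2τ − 1)e^{−3τ}(sinh 2τ)^{1/2}`, `q₁ = 3π₊`, the
equations (E1)–(E4) hold for every `τ > 0` and every γ, with `ρ = 0`,
`π₊ > 0` and `q₁ = +3π₊`. -/
theorem stmt_15 (γ : ℝ)
    (a2inv α β ρ πp q1 : ℝ → ℝ)
    (ha : a2inv = fun τ => Real.exp (3 * τ) * Real.sinh (2 * τ) ^ (-(1 / 2) : ℝ))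
    (hα : α = fun τ => (1 / 2) * (Real.cosh (2 * τ) / Real.sinh (2 * τ)) - 3 / 2)
    (hβ : β = fun τ => Real.cosh (2 * τ) / Real.sinh (2 * τ))
    (hρ : ρ = fun _ => (0 : ℝ))
    (hπ : πp = fun τ => (Real.cosh (2 * τ) / Real.sinh (2 * τ) - 1)
      * Real.exp (-3 * τ) * Real.sinh (2 * τ) ^ ((1 / 2) : ℝ))
    (hq1 : q1 = fun τ => 3 * πp τ) :
    ∀ τ : ℝ, 0 < τ →
      (deriv α τ - 2 * deriv β τ - 2 * α τ * β τ - 2 * (β τ) ^ 2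
        = (1 / 2) * (3 * γ - 2) * a2inv τ * ρ τ + 3 * a2inv τ * πp τ) ∧
      (2 * (α τ + β τ) = a2inv τ * q1 τ) ∧
      (-deriv α τ - 2 * α τ * β τ - 2
        = (1 / 2) * (2 - γ) * a2inv τ * ρ τ + 3 * a2inv τ * πp τ) ∧
      (deriv β τ + 2 * (β τ) ^ 2 - 2 = (1 / 2) * (2 - γ) * a2inv τ * ρ τ) ∧
      ρ τ = 0 ∧ 0 < πp τ ∧ q1 τ = 3 * πp τ := by
  intro τ hτ
  have hs : 0 < Real.sinh (2 * τ) := Real.sinh_pos_iff.mpr (by linarith)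
  have hcs : Real.cosh (2 * τ) ^ 2 = Real.sinh (2 * τ) ^ 2 + 1 := Real.cosh_sq _
  have hlin : HasDerivAt (fun t : ℝ => 2 * t) 2 τ := by
    simpa using (hasDerivAt_id τ).const_mul (2 : ℝ)
  have hd0 := (hlin.cosh).div (hlin.sinh) hs.ne'
  have hd : HasDerivAt (fun t : ℝ => Real.cosh (2 * t) / Real.sinh (2 * t))
      (2 * (1 - (Real.cosh (2 * τ) / Real.sinh (2 * τ)) ^ 2)) τ := by
    refine hd0.congr_deriv ?_
    field_simp
  have hdβ : deriv β τ = 2 * (1 - (Real.cosh (2 * τ) / Real.sinh (2 * τ)) ^ 2) := by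
    rw [hβ]; exact hd.deriv
  have hdα : deriv α τ = 1 - (Real.cosh (2 * τ) / Real.sinh (2 * τ)) ^ 2 := by
    rw [hα, ((hd.const_mul (1 / 2 : ℝ)).sub_const (3 / 2)).deriv]; ring
  have hprod : a2inv τ * πp τ = Real.cosh (2 * τ) / Real.sinh (2 * τ) - 1 := by
    have h1 : Real.exp (3 * τ) * Real.exp (-3 * τ) = 1 := by
      rw [← Real.exp_add]; simp
    have h2 : Real.sinh (2 * τ) ^ (-(1 / 2) : ℝ) * Real.sinh (2 * τ) ^ ((1 / 2) : ℝ) = 1 := by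
      rw [← Real.rpow_add hs]; simp
    rw [ha, hπ]
    linear_combination (Real.cosh (2 * τ) / Real.sinh (2 * τ) - 1) *
      (Real.sinh (2 * τ) ^ (-(1 / 2) : ℝ) * Real.sinh (2 * τ) ^ ((1 / 2) : ℝ) * h1 + h2)
  have hρ0 : ρ τ = 0 := by rw [hρ]
  have hq : q1 τ = 3 * πp τ := by rw [hq1]
  have hα0 : α τ = (1 / 2) * (Real.cosh (2 * τ) / Real.sinh (2 * τ)) - 3 / 2 := by rw [hα]
  have hβ0 : β τ = Real.cosh (2 * τ) / Real.sinh (2 * τ) := by rw [hβ]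
  have hpos : 0 < πp τ := by
    have : 0 < Real.cosh (2 * τ) / Real.sinh (2 * τ) - 1 := by
      rw [sub_pos, one_lt_div hs]; exact Real.sinh_lt_cosh _
    rw [hπ]
    positivity
  rw [hdα, hdβ, hρ0, hq, hα0, hβ0]
  refine ⟨?_, ?_, ?_, ?_, rfl, hpos, rfl⟩
  · linear_combination (-3) * hprod
  · linear_combination (-3) * hprod
  · linear_combination (-3) * hprod
  · ring
end

section
/- Fix r > 0 and γ = 2 (stiff fluid), and define on the interval τ > 0: a(τ)⁻² = e^{4rτ}(sinh 2τ)^{1+2r}, α(τ) = −2r − (1+2r)(cosh 2τ/sinh 2τ), β(τ) = cosh 2τ/sinh 2τ, ρ(τ) = (3+4r)(sinh 2τ)⁻²·a(τ)², π₊(τ) = (4r/3)(1 + cosh 2τ/sinh 2τ)·a(τ)², q₁(τ) = −3π₊(τ). Then for every τ > 0 the equations (E1) α' − 2β' − 2αβ − 2β² = 2a⁻²ρ + 3a⁻²π₊, (E2) 2(α+β) = a⁻²q₁, (E3) −α' − 2αβ − 2 = 3a⁻²π₊, (E4) β' + 2β² − 2 = 0 hold, with ρ > 0 and π₊ > 0.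 This is the left-handed stiff-fluid LRS Einstein–Maxwell solution. -/
/-- The left-handed stiff-fluid (γ = 2) LRS Einstein–Maxwell
solution: with `a⁻² = e^{4rτ}(sinh 2τ)^{1+2r}`,
`α = −2r − (1+2r)coth 2τ`, `β = coth 2τ`, `ρ = (3+4r)(sinh 2τ)⁻²·a²`,
`π₊ = (4r/3)(1 + coth 2τ)·a²`, `q₁ = −3π₊` (r > 0), the equations (E1)–(E4)
with γ = 2 hold for every `τ > 0`, with `ρ > 0` and `π₊ > 0`. -/
theorem stmt_16 (r : ℝ) (hr : 0 < r)
    (a2inv α β ρ πp q1 : ℝ → ℝ)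
    (ha : a2inv = fun τ => Real.exp (4 * r * τ) * Real.sinh (2 * τ) ^ ((1 + 2 * r) : ℝ))
    (hα : α = fun τ => -2 * r - (1 + 2 * r) * (Real.cosh (2 * τ) / Real.sinh (2 * τ)))
    (hβ : β = fun τ => Real.cosh (2 * τ) / Real.sinh (2 * τ))
    (hρ : ρ = fun τ => (3 + 4 * r) * (Real.sinh (2 * τ)) ^ (-2 : ℤ) * (a2inv τ)⁻¹)
    (hπ : πp = fun τ => (4 * r / 3) * (1 + Real.cosh (2 * τ) / Real.sinh (2 * τ))
      * (a2inv τ)⁻¹)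
    (hq1 : q1 = fun τ => -3 * πp τ) :
    ∀ τ : ℝ, 0 < τ →
      (deriv α τ - 2 * deriv β τ - 2 * α τ * β τ - 2 * (β τ) ^ 2
        = 2 * a2inv τ * ρ τ + 3 * a2inv τ * πp τ) ∧
      (2 * (α τ + β τ) = a2inv τ * q1 τ) ∧
      (-deriv α τ - 2 * α τ * β τ - 2 = 3 * a2inv τ * πp τ) ∧
      (deriv β τ + 2 * (β τ) ^ 2 - 2 = 0) ∧
      0 < ρ τ ∧ 0 < πp τ := by
  intro τ hτ
  have hs : 0 < Real.sinh (2 * τ) := Real.sinh_pos_iff.mpr (by linarith)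
  have hc : 0 < Real.cosh (2 * τ) := Real.cosh_pos _
  have hA : 0 < a2inv τ := by
    rw [ha]
    exact mul_pos (Real.exp_pos _) (Real.rpow_pos_of_pos hs _)
  have hcs := Real.cosh_sq (2 * τ)
  have h2 : HasDerivAt (fun t : ℝ => 2 * t) 2 τ := by
    simpa using (hasDerivAt_id τ).const_mul (2 : ℝ)
  have hS2 : (Real.sinh (2 * τ)) ^ (-2 : ℤ) = (Real.cosh (2 * τ) / Real.sinh (2 * τ)) ^ 2 - 1 := by
    rw [zpow_neg, div_pow, hcs]
    have := hs.ne'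
    norm_cast
    field_simp
    ring
  have hD : HasDerivAt (fun t : ℝ => Real.cosh (2 * t) / Real.sinh (2 * t))
      (2 - 2 * (Real.cosh (2 * τ) / Real.sinh (2 * τ)) ^ 2) τ := by
    have h := h2.cosh.div h2.sinh hs.ne'
    refine h.congr_deriv ?_
    have := hs.ne'
    field_simp
  have hDα := (hD.const_mul (1 + 2 * r)).const_sub (-2 * r)
  have dβ : deriv β τ = 2 - 2 * (Real.cosh (2 * τ) / Real.sinh (2 * τ)) ^ 2 := by
    rw [hβ]; exact hD.deriv
  have dα : deriv α τ = -((1 + 2 * r) * (2 - 2 * (Real.cosh (2 * τ) / Real.sinh (2 * τ)) ^ 2)) := by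
    rw [hα]; exact hDα.deriv
  have vρ : a2inv τ * ρ τ = (3 + 4 * r) * ((Real.cosh (2 * τ) / Real.sinh (2 * τ)) ^ 2 - 1) := by
    rw [← hS2, hρ]
    have := hA.ne'
    simp only
    rw [mul_comm, mul_assoc, inv_mul_cancel₀ this, mul_one]
  have vπ : a2inv τ * πp τ = (4 * r / 3) * (1 + Real.cosh (2 * τ) / Real.sinh (2 * τ)) := by
    rw [hπ]
    have := hA.ne'
    simp only
    rw [mul_comm, mul_assoc, inv_mul_cancel₀ this, mul_one]
  have vα : α τ = -2 * r - (1 + 2 * r) * (Real.cosh (2 * τ) / Real.sinh (2 * τ)) := by rw [hα]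
  have vβ : β τ = Real.cosh (2 * τ) / Real.sinh (2 * τ) := by rw [hβ]
  have vq : q1 τ = -3 * πp τ := by rw [hq1]
  refine ⟨?_, ?_, ?_, ?_, ?_, ?_⟩
  · rw [dα, dβ, vα, vβ, mul_assoc 2 (a2inv τ), mul_assoc 3 (a2inv τ), vρ, vπ]; ring
  · rw [vα, vβ, vq]; linear_combination 3 * vπ
  · rw [dα, vα, vβ, mul_assoc 3 (a2inv τ), vπ]; ring
  · rw [dβ, vβ]; ring
  · rw [hρ]; simp only; positivity
  · rw [hπ]; simp only; positivity
end

section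
/- Fix 0 < r < 3/4 and γ = 2 (stiff fluid), and define on the interval τ > 0: a(τ)⁻² = e^{4rτ}(sinh 2τ)^{1−2r}, α(τ) = −2r − (1−2r)(cosh 2τ/sinh 2τ), β(τ) = cosh 2τ/sinh 2τ, ρ(τ) = (3−4r)(sinh 2τ)⁻²·a(τ)², π₊(τ) = (4r/3)(cosh 2τ/sinh 2τ − 1)·a(τ)², q₁(τ) = +3π₊(τ). Then for every τ > 0 the equations (E1) α' − 2β' − 2αβ − 2β² = 2a⁻²ρ + 3a⁻²π₊, (E2) 2(α+β) = a⁻²q₁, (E3) −α' − 2αβ − 2 = 3a⁻²π₊, (E4) β' + 2β² − 2 = 0 hold, with ρ > 0 and π₊ > 0. This is the right-handed stiff-fluid LRS Einstein–Maxwell solution; the restriction r < 3/4 is exactly the positivity condition for ρ. -/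
/-- The right-handed stiff-fluid (γ = 2) LRS Einstein–Maxwell
solution: with `a⁻² = e^{4rτ}(sinh 2τ)^{1−2r}`,
`α = −2r − (1−2r)coth 2τ`, `β = coth 2τ`, `ρ = (3−4r)(sinh 2τ)⁻²·a²`,
`π₊ = (4r/3)(coth 2τ − 1)·a²`, `q₁ = +3π₊` (0 < r < 3/4), the equations
(E1)–(E4) with γ = 2 hold for every `τ > 0`, with `ρ > 0` and `π₊ > 0`. -/
theorem stmt_17 (r : ℝ) (hr0 : 0 < r) (hr1 : r < 3 / 4)
    (a2inv α β ρ πp q1 : ℝ → ℝ)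
    (ha : a2inv = fun τ => Real.exp (4 * r * τ) * Real.sinh (2 * τ) ^ ((1 - 2 * r) : ℝ))
    (hα : α = fun τ => -2 * r - (1 - 2 * r) * (Real.cosh (2 * τ) / Real.sinh (2 * τ)))
    (hβ : β = fun τ => Real.cosh (2 * τ) / Real.sinh (2 * τ))
    (hρ : ρ = fun τ => (3 - 4 * r) * (Real.sinh (2 * τ)) ^ (-2 : ℤ) * (a2inv τ)⁻¹)
    (hπ : πp = fun τ => (4 * r / 3) * (Real.cosh (2 * τ) / Real.sinh (2 * τ) - 1)
      * (a2inv τ)⁻¹)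
    (hq1 : q1 = fun τ => 3 * πp τ) :
    ∀ τ : ℝ, 0 < τ →
      (deriv α τ - 2 * deriv β τ - 2 * α τ * β τ - 2 * (β τ) ^ 2
        = 2 * a2inv τ * ρ τ + 3 * a2inv τ * πp τ) ∧
      (2 * (α τ + β τ) = a2inv τ * q1 τ) ∧
      (-deriv α τ - 2 * α τ * β τ - 2 = 3 * a2inv τ * πp τ) ∧
      (deriv β τ + 2 * (β τ) ^ 2 - 2 = 0) ∧
      0 < ρ τ ∧ 0 < πp τ := by
  intro τ hτ
  have hs : 0 < Real.sinh (2 * τ) := Real.sinh_pos_iff.mpr (by linarith)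
  have hcs : Real.sinh (2 * τ) < Real.cosh (2 * τ) := Real.sinh_lt_cosh _
  have hsq : Real.cosh (2 * τ) ^ 2 = Real.sinh (2 * τ) ^ 2 + 1 := Real.cosh_sq _
  have hA : 0 < a2inv τ := by
    rw [ha]
    exact mul_pos (Real.exp_pos _) (Real.rpow_pos_of_pos hs _)
  have hlin : HasDerivAt (fun t : ℝ => 2 * t) 2 τ := by
    simpa using (hasDerivAt_id τ).const_mul (2 : ℝ)
  have hd0 := hlin.cosh.fun_div hlin.sinh hs.ne'
  have hc1 : 1 < Real.cosh (2 * τ) / Real.sinh (2 * τ) := (one_lt_div hs).mpr hcs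
  have hinv : (Real.sinh (2 * τ)) ^ (-2 : ℤ)
      = (Real.cosh (2 * τ) / Real.sinh (2 * τ)) ^ 2 - 1 := by
    rw [div_pow, hsq, zpow_neg]
    have := hs.ne'
    norm_cast
    field_simp
    ring
  have hd : HasDerivAt (fun t : ℝ => Real.cosh (2 * t) / Real.sinh (2 * t))
      (2 - 2 * (Real.cosh (2 * τ) / Real.sinh (2 * τ)) ^ 2) τ := by
    have h0 := hs.ne'
    have he : 2 - 2 * (Real.cosh (2 * τ) / Real.sinh (2 * τ)) ^ 2
        = (Real.sinh (2 * τ) * 2 * Real.sinh (2 * τ)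
          - Real.cosh (2 * τ) * (Real.cosh (2 * τ) * 2)) / Real.sinh (2 * τ) ^ 2 := by
      field_simp
    rw [he]
    exact hd0
  have hdβ : deriv β τ = 2 - 2 * (Real.cosh (2 * τ) / Real.sinh (2 * τ)) ^ 2 := by
    rw [hβ]; exact hd.deriv
  have hdα : deriv α τ
      = -((1 - 2 * r) * (2 - 2 * (Real.cosh (2 * τ) / Real.sinh (2 * τ)) ^ 2)) := by
    rw [hα]; exact ((hd.const_mul (1 - 2 * r)).const_sub (-2 * r)).deriv
  have hρτ : ρ τ = (3 - 4 * r) * ((Real.cosh (2 * τ) / Real.sinh (2 * τ)) ^ 2 - 1)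
      * (a2inv τ)⁻¹ := by
    rw [hρ, ← hinv]
  have hπτ : πp τ = (4 * r / 3) * (Real.cosh (2 * τ) / Real.sinh (2 * τ) - 1)
      * (a2inv τ)⁻¹ := by
    rw [hπ]
  have hqτ : q1 τ = 3 * πp τ := by rw [hq1]
  have hατ : α τ = -2 * r - (1 - 2 * r) * (Real.cosh (2 * τ) / Real.sinh (2 * τ)) := by
    rw [hα]
  have hβτ : β τ = Real.cosh (2 * τ) / Real.sinh (2 * τ) := by rw [hβ]
  rw [hqτ, hdβ, hdα, hρτ, hπτ, hατ, hβτ]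
  generalize Real.cosh (2 * τ) / Real.sinh (2 * τ) = c at *
  generalize a2inv τ = A at *
  have hA' := hA.ne'
  refine ⟨?_, ?_, ?_, ?_, ?_, ?_⟩
  · field_simp
    ring
  · field_simp
    ring
  · field_simp
    ring
  · ring
  · have h1 : 0 < 3 - 4 * r := by linarith
    have h2 : 0 < c ^ 2 - 1 := by nlinarith
    positivity
  · have h2 : 0 < c - 1 := by linarith
    positivity
end

section
/- Fix r > 1 and γ = 2/3, and define on ℝ: u(τ) = e^{2(1−r)τ}/(1 + e^{2(1−r)τ}), a(τ)⁻² = e^{2rτ}(1 + e^{2(1−r)τ})^{−1/2}, α(τ) = −r + ((1−r)/2)u(τ), β(τ) = r + (1−r)u(τ), ρ(τ) = 3(r²−1)(1−u(τ))·a(τ)², π₊(τ) = (r−1)u(τ)·a(τ)², q₁(τ) = −3π₊(τ). Then for every τ ∈ ℝ the equations (E1) α' − 2β' − 2αβ − 2β² = 3a⁻²π₊, (E2) 2(α+β) = a⁻²q₁, (E3) −α' − 2αβ − 2 = (2/3)a⁻²ρ + 3a⁻²π₊, (E4) β' + 2β² − 2 = (2/3)a⁻²ρ hold, with ρ > 0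 and π₊ > 0. This left-handed γ = 2/3 LRS Einstein–Maxwell solution is a new exact solution; it is past-asymptotic to an electro-vacuum plane wave and future-asymptotic to an open FLRW universe. -/
/-- The left-handed γ = 2/3 LRS Einstein–Maxwell solution: with
`u = e^{2(1−r)τ}/(1 + e^{2(1−r)τ})`, `a⁻² = e^{2rτ}(1 + e^{2(1−r)τ})^{−1/2}`,
`α = −r + ((1−r)/2)u`, `β = r + (1−r)u`, `ρ = 3(r²−1)(1−u)·a²`,
`π₊ = (r−1)u·a²`, `q₁ = −3π₊` (r > 1), the equations (E1)–(E4) with γ = 2/3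
hold for every τ ∈ ℝ, with `ρ > 0` and `π₊ > 0`. -/
theorem stmt_18 (r : ℝ) (hr : 1 < r)
    (u a2inv α β ρ πp q1 : ℝ → ℝ)
    (hu : u = fun τ => Real.exp (2 * (1 - r) * τ) / (1 + Real.exp (2 * (1 - r) * τ)))
    (ha : a2inv = fun τ => Real.exp (2 * r * τ)
      * (1 + Real.exp (2 * (1 - r) * τ)) ^ (-(1 / 2) : ℝ))
    (hα : α = fun τ => -r + ((1 - r) / 2) * u τ)
    (hβ : β = fun τ => r + (1 - r) * u τ)
    (hρ : ρ = fun τ => 3 * (r ^ 2 - 1) * (1 - u τ) * (a2inv τ)⁻¹)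
    (hπ : πp = fun τ => (r - 1) * u τ * (a2inv τ)⁻¹)
    (hq1 : q1 = fun τ => -3 * πp τ) :
    ∀ τ : ℝ,
      (deriv α τ - 2 * deriv β τ - 2 * α τ * β τ - 2 * (β τ) ^ 2
        = 3 * a2inv τ * πp τ) ∧
      (2 * (α τ + β τ) = a2inv τ * q1 τ) ∧
      (-deriv α τ - 2 * α τ * β τ - 2
        = (2 / 3) * a2inv τ * ρ τ + 3 * a2inv τ * πp τ) ∧
      (deriv β τ + 2 * (β τ) ^ 2 - 2 = (2 / 3) * a2inv τ * ρ τ) ∧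
      0 < ρ τ ∧ 0 < πp τ := by
  intro τ
  have hE : 0 < Real.exp (2 * (1 - r) * τ) := Real.exp_pos _
  have hapos : 0 < a2inv τ := by
    rw [ha]; positivity
  have hu0 : 0 < u τ := by
    rw [hu]; positivity
  have hu1 : u τ < 1 := by
    rw [hu]
    show Real.exp (2 * (1 - r) * τ) / (1 + Real.exp (2 * (1 - r) * τ)) < 1
    rw [div_lt_one (by positivity)]
    linarith
  have hud : HasDerivAt u (2 * (1 - r) * u τ * (1 - u τ)) τ := by
    have h1 : HasDerivAt (fun τ : ℝ => Real.exp (2 * (1 - r) * τ))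
        (Real.exp (2 * (1 - r) * τ) * (2 * (1 - r) * 1)) τ :=
      ((hasDerivAt_id' τ).const_mul (2 * (1 - r))).exp
    have h2 := h1.fun_div (h1.const_add 1) (by positivity)
    rw [hu]
    refine h2.congr_deriv ?_
    beta_reduce
    have hne1 : 1 + Real.exp (2 * (1 - r) * τ) ≠ 0 := by positivity
    generalize Real.exp (2 * (1 - r) * τ) = E at *
    field_simp
  have hαd : deriv α τ = (1 - r) / 2 * (2 * (1 - r) * u τ * (1 - u τ)) := by
    rw [hα]; exact ((hud.const_mul _).const_add _).deriv
  have hβd : deriv β τ = (1 - r) * (2 * (1 - r) * u τ * (1 - u τ)) := by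
    rw [hβ]; exact ((hud.const_mul _).const_add _).deriv
  have eα : α τ = -r + ((1 - r) / 2) * u τ := by rw [hα]
  have eβ : β τ = r + (1 - r) * u τ := by rw [hβ]
  have eρ : ρ τ = 3 * (r ^ 2 - 1) * (1 - u τ) * (a2inv τ)⁻¹ := by rw [hρ]
  have eπ : πp τ = (r - 1) * u τ * (a2inv τ)⁻¹ := by rw [hπ]
  have eq : q1 τ = -3 * πp τ := by rw [hq1]
  have hne := hapos.ne'
  have kρ : a2inv τ * ρ τ = 3 * (r ^ 2 - 1) * (1 - u τ) := by
    rw [eρ]; field_simp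
  have kπ : a2inv τ * πp τ = (r - 1) * u τ := by
    rw [eπ]; field_simp
  rw [hαd, hβd, eq, eα, eβ]
  refine ⟨?_, ?_, ?_, ?_, ?_, ?_⟩
  · linear_combination (-3) * kπ
  · linear_combination 3 * kπ
  · linear_combination (-2 / 3) * kρ - 3 * kπ
  · linear_combination (-2 / 3) * kρ
  · rw [eρ]
    have h1 : 0 < r ^ 2 - 1 := by nlinarith
    have h2 : 0 < 1 - u τ := by linarith
    positivity
  · rw [eπ]
    have h1 : 0 < r - 1 := by linarith
    positivity
end

section
/- Fix r > 1 and γ = 2/3, and define on the interval τ > 0: v(τ) = e^{−2(1+r)τ}/(1 − e^{−2(1+r)τ}), a(τ)⁻² = e^{2rτ}(1 − e^{−2(1+r)τ})^{−1/2}, α(τ) = −r + ((1+r)/2)v(τ), β(τ) = r + (1+r)v(τ), ρ(τ) = 3(r²−1)(1+v(τ))·a(τ)², π₊(τ) = (r+1)v(τ)·a(τ)², q₁(τ) = +3π₊(τ). Then for every τ > 0 the equations (E1) α' − 2β' − 2αβ − 2β² = 3a⁻²π₊, (E2) 2(α+β) = a⁻²q₁, (E3) −α' − 2αβ − 2 =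 (2/3)a⁻²ρ + 3a⁻²π₊, (E4) β' + 2β² − 2 = (2/3)a⁻²ρ hold, with ρ > 0 and π₊ > 0. This right-handed γ = 2/3 LRS Einstein–Maxwell solution is a new exact solution; it is future-asymptotic to an open FLRW universe. -/
/-- The right-handed γ = 2/3 LRS Einstein–Maxwell solution: with
`v = e^{−2(1+r)τ}/(1 − e^{−2(1+r)τ})`, `a⁻² = e^{2rτ}(1 − e^{−2(1+r)τ})^{−1/2}`,
`α = −r + ((1+r)/2)v`, `β = r + (1+r)v`, `ρ = 3(r²−1)(1+v)·a²`,
`π₊ = (r+1)v·a²`, `q₁ = +3π₊` (r > 1), the equations (E1)–(E4) with γ = 2/3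
hold for every `τ > 0`, with `ρ > 0` and `π₊ > 0`. -/
theorem stmt_19 (r : ℝ) (hr : 1 < r)
    (v a2inv α β ρ πp q1 : ℝ → ℝ)
    (hv : v = fun τ => Real.exp (-2 * (1 + r) * τ)
      / (1 - Real.exp (-2 * (1 + r) * τ)))
    (ha : a2inv = fun τ => Real.exp (2 * r * τ)
      * (1 - Real.exp (-2 * (1 + r) * τ)) ^ (-(1 / 2) : ℝ))
    (hα : α = fun τ => -r + ((1 + r) / 2) * v τ)
    (hβ : β = fun τ => r + (1 + r) * v τ)
    (hρ : ρ = fun τ => 3 * (r ^ 2 - 1) * (1 + v τ) * (a2inv τ)⁻¹)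
    (hπ : πp = fun τ => (r + 1) * v τ * (a2inv τ)⁻¹)
    (hq1 : q1 = fun τ => 3 * πp τ) :
    ∀ τ : ℝ, 0 < τ →
      (deriv α τ - 2 * deriv β τ - 2 * α τ * β τ - 2 * (β τ) ^ 2
        = 3 * a2inv τ * πp τ) ∧
      (2 * (α τ + β τ) = a2inv τ * q1 τ) ∧
      (-deriv α τ - 2 * α τ * β τ - 2
        = (2 / 3) * a2inv τ * ρ τ + 3 * a2inv τ * πp τ) ∧
      (deriv β τ + 2 * (β τ) ^ 2 - 2 = (2 / 3) * a2inv τ * ρ τ) ∧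
      0 < ρ τ ∧ 0 < πp τ := by
  intro τ hτ
  have hE1 : Real.exp (-2 * (1 + r) * τ) < 1 := by
    rw [Real.exp_lt_one_iff]
    nlinarith [mul_pos (by linarith : (0:ℝ) < 1 + r) hτ]
  have hE0 := Real.exp_pos (-2 * (1 + r) * τ)
  have hD : 0 < 1 - Real.exp (-2 * (1 + r) * τ) := by linarith
  have hvpos : 0 < v τ := by
    rw [hv]; exact div_pos hE0 hD
  have hapos : 0 < a2inv τ := by
    rw [ha]; exact mul_pos (Real.exp_pos _) (Real.rpow_pos_of_pos hD _)
  have hdv : HasDerivAt v (-2 * (1 + r) * v τ * (1 + v τ)) τ := by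
    have h1 : HasDerivAt (fun t : ℝ => Real.exp (-2 * (1 + r) * t))
        (Real.exp (-2 * (1 + r) * τ) * (-2 * (1 + r))) τ := by
      have h0 := (hasDerivAt_id τ).const_mul (-2 * (1 + r))
      rw [mul_one] at h0
      exact h0.exp
    have h2 := h1.div (h1.const_sub 1) hD.ne'
    rw [hv]
    refine HasDerivAt.congr_deriv h2 ?_
    have := hD.ne'
    beta_reduce
    clear h2 h1 hE1 hE0 hD
    generalize Real.exp (-2 * (1 + r) * τ) = E at this ⊢
    field_simp
    ring
  have hdα : deriv α τ = (1 + r) / 2 * (-2 * (1 + r) * v τ * (1 + v τ)) := by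
    rw [hα]; exact ((hdv.const_mul _).const_add _).deriv
  have hdβ : deriv β τ = (1 + r) * (-2 * (1 + r) * v τ * (1 + v τ)) := by
    rw [hβ]; exact ((hdv.const_mul _).const_add _).deriv
  have hα' : α τ = -r + ((1 + r) / 2) * v τ := by rw [hα]
  have hβ' : β τ = r + (1 + r) * v τ := by rw [hβ]
  have hρ' : ρ τ = 3 * (r ^ 2 - 1) * (1 + v τ) * (a2inv τ)⁻¹ := by rw [hρ]
  have hπ' : πp τ = (r + 1) * v τ * (a2inv τ)⁻¹ := by rw [hπ]
  have hq' : q1 τ = 3 * πp τ := by rw [hq1]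
  have hne := hapos.ne'
  have haρ : a2inv τ * ρ τ = 3 * (r ^ 2 - 1) * (1 + v τ) := by
    rw [hρ']; field_simp
  have haπ : a2inv τ * πp τ = (r + 1) * v τ := by
    rw [hπ']; field_simp
  have hipos := inv_pos.mpr hapos
  have hr2 : 0 < r ^ 2 - 1 := by nlinarith
  refine ⟨?_, ?_, ?_, ?_, ?_, ?_⟩
  · rw [hdα, hdβ, hα', hβ', mul_assoc 3, haπ]; ring
  · rw [hq', hα', hβ', mul_left_comm, haπ]; ring
  · rw [hdα, hα', hβ', mul_assoc 3, haπ, mul_assoc (2 / 3), haρ]; ring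
  · rw [hdβ, hβ', mul_assoc (2 / 3), haρ]; ring
  · rw [hρ']; positivity
  · rw [hπ']; positivity
end
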